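/- Let f be an inner function with f(0)=0 which is not a rotation, and ε_1,ε_2,ε_3,ε_4 ∈ {1,−1} with ε_1ε_2 = ε_3ε_4 = −1. Then for all positive integers n_1<n_2<n_3<n_4, the absolute value of ∫_{∂𝔻} f^{ε_1 n_1} f^{ε_2 n_2} f^{ε_3 n_3} f^{ε_4 n_4} dm equals |f'(0)|^{(n_2−n_1)+(n_4−n_3)}. -/

import Mathlib

open MeasureTheory Set Metric Filter Complex

/-- Normalized Lebesgue (arc-length) measure on the unit circle, as a measure on ℂ. -/
noncomputable def m : Measure ℂ :=
  (ENNReal.ofReal (2 * Real.pi))⁻¹ •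
    (Measure.map (fun θ : ℝ => Complex.exp ((θ : ℂ) * Complex.I))
      (volume.restrict (Set.Ioc (0:ℝ) (2 * Real.pi))))

/-- `spow F ε n` is `F^[n]` if `ε = 1` and its complex conjugate if `ε = -1`. -/
noncomputable def spow (F : ℂ → ℂ) (ε : ℤ) (n : ℕ) (z : ℂ) : ℂ :=
  if ε = 1 then F^[n] z else (starRingEnd ℂ) (F^[n] z)

open scoped ComplexConjugate

lemma mul_conj_of_norm_one {z : ℂ} (hz : ‖z‖ = 1) : z * conj z = 1 := by
  rw [mul_conj, normSq_eq_norm_sq, hz]; simp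

lemma pow_mul_conj_pow_of_norm_one {z : ℂ} (hz : ‖z‖ = 1) (i j : ℕ) :
    z ^ i * conj z ^ j = if j ≤ i then z ^ (i - j) else conj (z ^ (j - i)) := by
  have h1 := mul_conj_of_norm_one hz
  split_ifs with h
  · obtain ⟨k, rfl⟩ := Nat.exists_eq_add_of_le h
    rw [add_comm j k, pow_add, mul_assoc, ← mul_pow, h1]; simp
  · obtain ⟨k, rfl⟩ := Nat.exists_eq_add_of_le (not_le.mp h).le
    rw [pow_add, ← mul_assoc, ← mul_pow, h1]; simp

lemma integrable_of_norm_le_one {P : Measure ℂ} [IsFiniteMeasure P] {g : ℂ → ℂ}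
    (hg : AEStronglyMeasurable g P) (hb : ∀ᵐ z ∂P, ‖g z‖ ≤ 1) : Integrable g P :=
  Integrable.of_bound hg 1 hb

lemma integral_pow_mul_conj_pow {P : Measure ℂ} (hP : ∀ᵐ z ∂P, ‖z‖ = 1) (i j : ℕ) :
    ∫ z, z ^ i * conj z ^ j ∂P =
      if j ≤ i then ∫ z, z ^ (i - j) ∂P else conj (∫ z, z ^ (j - i) ∂P) := by
  rw [integral_congr_ae (hP.mono fun z hz ↦ pow_mul_conj_pow_of_norm_one hz i j)]
  split_ifs
  · rfl
  · exact integral_conj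

lemma integrable_pow_mul_conj_pow {P : Measure ℂ} [IsFiniteMeasure P]
    (hP : ∀ᵐ z ∂P, ‖z‖ = 1) (i j : ℕ) : Integrable (fun z ↦ z ^ i * conj z ^ j) P := by
  refine integrable_of_norm_le_one (by fun_prop) (hP.mono fun z hz ↦ ?_)
  simp [hz]

lemma inner_mul_I_pow (z t : ℂ) (n : ℕ) :
    ((inner ℝ z t : ℝ) * I) ^ n / (n.factorial : ℂ) =
      ∑ k ∈ Finset.range (n + 1),
        ((conj t) ^ k * t ^ (n - k) * (n.choose k) * (I / 2) ^ n / n.factorial) *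
          (z ^ k * conj z ^ (n - k)) := by
  have h : ((inner ℝ z t : ℝ) : ℂ) * I = (z * conj t + conj z * t) * (I / 2) := by
    apply Complex.ext <;> simp [Complex.inner] <;> ring
  rw [h, mul_pow, add_pow, Finset.sum_mul, Finset.sum_div]
  refine Finset.sum_congr rfl fun k _ ↦ ?_
  ring

lemma hasSum_charFun {P : Measure ℂ} [IsFiniteMeasure P] (hP : ∀ᵐ z ∂P, ‖z‖ = 1) (t : ℂ) :
    HasSum (fun n : ℕ ↦ ∑ k ∈ Finset.range (n + 1),
        ((conj t) ^ k * t ^ (n - k) * (n.choose k) * (I / 2) ^ n / n.factorial) *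
          ∫ z, z ^ k * conj z ^ (n - k) ∂P) (charFun P t) := by
  have key : HasSum (fun n : ℕ ↦ ∫ z, ((inner ℝ z t : ℝ) * I) ^ n / (n.factorial : ℂ) ∂P)
      (∫ z, cexp ((inner ℝ z t : ℝ) * I) ∂P) := by
    refine hasSum_integral_of_dominated_convergence
      (fun n _ ↦ ‖t‖ ^ n / n.factorial) ?_ ?_ ?_ ?_ ?_
    · intro n
      exact Continuous.aestronglyMeasurable (by fun_prop)
    · intro n
      filter_upwards [hP] with z hz
      have h1 : |(inner ℝ z t : ℝ)| ≤ ‖t‖ := by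
        simpa [hz] using abs_real_inner_le_norm z t
      simp only [norm_div, norm_pow, norm_mul, norm_real, norm_I, mul_one, Real.norm_eq_abs,
        norm_natCast]
      gcongr
    · exact Eventually.of_forall fun _ ↦ Real.summable_pow_div_factorial _
    · exact integrable_const _
    · refine Eventually.of_forall fun z ↦ ?_
      rw [Complex.exp_eq_exp_ℂ]
      exact NormedSpace.expSeries_div_hasSum_exp _
  rw [charFun_apply]
  convert key using 2 with n
  simp_rw [inner_mul_I_pow]
  rw [integral_finsetSum _ fun k _ ↦ (integrable_pow_mul_conj_pow hP _ _).const_mul _]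
  simp_rw [integral_const_mul]

/-- A finite measure carried by the unit circle is determined by its nonnegative moments. -/
lemma measure_ext_of_moments {P Q : Measure ℂ} [IsFiniteMeasure P] [IsFiniteMeasure Q]
    (hP : ∀ᵐ z ∂P, ‖z‖ = 1) (hQ : ∀ᵐ z ∂Q, ‖z‖ = 1)
    (h : ∀ n : ℕ, ∫ z, z ^ n ∂P = ∫ z, z ^ n ∂Q) : P = Q := by
  refine Measure.ext_of_charFun (funext fun t ↦ ?_)
  refine (hasSum_charFun hP t).unique ?_
  simp_rw [integral_pow_mul_conj_pow hP, h, ← integral_pow_mul_conj_pow hQ]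
  exact hasSum_charFun hQ t

lemma m_eq_map_circleMap : m = (ENNReal.ofReal (2 * Real.pi))⁻¹ •
    Measure.map (circleMap 0 1) (volume.restrict (Set.Ioc (0:ℝ) (2 * Real.pi))) := by
  unfold m
  congr 2
  ext θ
  simp [circleMap]

instance isProbabilityMeasure_m : IsProbabilityMeasure m := by
  constructor
  rw [m_eq_map_circleMap, Measure.smul_apply, Measure.map_apply (by fun_prop) .univ]
  simp only [preimage_univ, Measure.restrict_apply_univ, Real.volume_Ioc, sub_zero, smul_eq_mul]
  exact ENNReal.inv_mul_cancel (by simp [Real.pi_pos]) ENNReal.ofReal_ne_top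

lemma ae_m_norm_eq_one : ∀ᵐ z ∂m, ‖z‖ = 1 := by
  rw [m_eq_map_circleMap]
  refine Measure.ae_smul_measure ?_ _
  rw [ae_map_iff (by fun_prop) (measurableSet_eq_fun (by fun_prop) (by fun_prop))]
  exact Eventually.of_forall fun θ ↦ by simp

lemma integral_m_eq_circleAverage {h : ℂ → ℂ} (hh : AEStronglyMeasurable h m) :
    ∫ z, h z ∂m = Real.circleAverage h 0 1 := by
  have h2 : (ENNReal.ofReal (2 * Real.pi))⁻¹ ≠ 0 :=
    ENNReal.inv_ne_zero.mpr ENNReal.ofReal_ne_top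
  rw [m_eq_map_circleMap] at hh ⊢
  have hh' := hh.mono_ac (Measure.absolutelyContinuous_smul h2)
  rw [integral_smul_measure, integral_map (by fun_prop) hh', Real.circleAverage_def,
    intervalIntegral.integral_of_le Real.two_pi_pos.le]
  simp [Real.pi_pos.le]

lemma aestronglyMeasurable_m_of_continuousOn {h : ℂ → ℂ} (hh : ContinuousOn h (sphere 0 1)) :
    AEStronglyMeasurable h m := by
  have : m.restrict (sphere 0 1) = m :=
    Measure.restrict_eq_self_of_ae_mem (ae_m_norm_eq_one.mono fun z hz ↦ by simpa using hz)
  rw [← this]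
  exact hh.aestronglyMeasurable isClosed_sphere.measurableSet

lemma mul_mem_ball {r : ℝ} (hr : r ∈ Ioo (0:ℝ) 1) {z : ℂ} (hz : ‖z‖ = 1) :
    (r : ℂ) * z ∈ ball (0:ℂ) 1 := by
  simp [hz, abs_of_pos hr.1, hr.2]

lemma aestronglyMeasurable_dilate {H : ℂ → ℂ} (hH : DifferentiableOn ℂ H (ball 0 1)) {r : ℝ}
    (hr : r ∈ Ioo (0:ℝ) 1) : AEStronglyMeasurable (fun z ↦ H (r * z)) m :=
  aestronglyMeasurable_m_of_continuousOn <| hH.continuousOn.comp (by fun_prop)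
    fun z hz ↦ mul_mem_ball hr (by simpa using hz)

lemma integral_dilate {H : ℂ → ℂ} (hH : DifferentiableOn ℂ H (ball 0 1)) {r : ℝ}
    (hr : r ∈ Ioo (0:ℝ) 1) : ∫ z, H (r * z) ∂m = H 0 := by
  rw [integral_m_eq_circleAverage (aestronglyMeasurable_dilate hH hr)]
  have : DiffContOnCl ℂ (fun z ↦ H (r * z)) (ball 0 |1|) := by
    apply DifferentiableOn.diffContOnCl
    refine hH.comp (by fun_prop) fun z hz ↦ ?_
    rw [abs_one, closure_ball _ one_ne_zero, mem_closedBall_zero_iff] at hz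
    rw [mem_ball_zero_iff, norm_mul, norm_real, Real.norm_of_nonneg hr.1.le]
    nlinarith [hr.1, hr.2]
  simpa using this.circleAverage

lemma eventually_mem_Ioo : ∀ᶠ r : ℝ in nhdsWithin 1 (Iio 1), r ∈ Ioo (0:ℝ) 1 :=
  Ioo_mem_nhdsLT one_pos

/-- The mean value property for radial boundary values of a bounded holomorphic function. -/
lemma integral_radialLimit {H G : ℂ → ℂ} (hH : DifferentiableOn ℂ H (ball 0 1))
    (hb : ∀ z ∈ ball (0:ℂ) 1, ‖H z‖ ≤ 1)
    (hlim : ∀ᵐ z ∂m, Tendsto (fun r : ℝ => H ((r : ℂ) * z)) (nhdsWithin 1 (Iio 1)) (nhds (G z))) :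
    ∫ z, G z ∂m = H 0 := by
  have h1 : Tendsto (fun r : ℝ ↦ ∫ z, H (r * z) ∂m) (nhdsWithin 1 (Iio 1))
      (nhds (∫ z, G z ∂m)) := by
    refine tendsto_integral_filter_of_dominated_convergence (fun _ ↦ 1) ?_ ?_
      (integrable_const _) hlim
    · filter_upwards [eventually_mem_Ioo] with r hr using aestronglyMeasurable_dilate hH hr
    · filter_upwards [eventually_mem_Ioo] with r hr
      filter_upwards [ae_m_norm_eq_one] with z hz using hb _ (mul_mem_ball hr hz)
  refine tendsto_nhds_unique h1 (tendsto_const_nhds.congr' ?_)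
  filter_upwards [eventually_mem_Ioo] with r hr using (integral_dilate hH hr).symm

lemma aestronglyMeasurable_radialLimit {H G : ℂ → ℂ} (hH : DifferentiableOn ℂ H (ball 0 1))
    (hlim : ∀ᵐ z ∂m, Tendsto (fun r : ℝ => H ((r : ℂ) * z)) (nhdsWithin 1 (Iio 1)) (nhds (G z))) :
    AEStronglyMeasurable G m := by
  obtain ⟨u, -, hu, hlu⟩ := exists_seq_strictMono_tendsto' (zero_lt_one (α := ℝ))
  have hu' : Tendsto u atTop (nhdsWithin 1 (Iio 1)) :=
    tendsto_nhdsWithin_iff.mpr ⟨hlu, Eventually.of_forall fun n ↦ (hu n).2⟩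
  exact aestronglyMeasurable_of_tendsto_ae atTop (fun n ↦ aestronglyMeasurable_dilate hH (hu n))
    (hlim.mono fun z hz ↦ hz.comp hu')

/-- `f` is an inner function fixing the origin, with radial boundary values `F`. -/
structure IsInnerFixingZero (f F : ℂ → ℂ) : Prop where
  differentiableOn : DifferentiableOn ℂ f (ball 0 1)
  mapsTo : MapsTo f (ball 0 1) (ball 0 1)
  map_zero : f 0 = 0
  tendsto : ∀ᵐ z ∂m, Tendsto (fun r : ℝ => f ((r : ℂ) * z)) (nhdsWithin 1 (Iio 1)) (nhds (F z))
  norm_eq_one : ∀ᵐ z ∂m, ‖F z‖ = 1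

lemma isInnerFixingZero_id : IsInnerFixingZero id id where
  differentiableOn := differentiableOn_id
  mapsTo := mapsTo_id _
  map_zero := rfl
  tendsto := Eventually.of_forall fun z ↦ tendsto_nhdsWithin_of_tendsto_nhds <| by
    have : Continuous fun r : ℝ ↦ id ((r : ℂ) * z) := by simp only [id]; fun_prop
    simpa using this.tendsto 1
  norm_eq_one := ae_m_norm_eq_one

/-- The measure on the circle with density `1 + Re (c z)` with respect to `m`. -/
noncomputable def tilt (c : ℂ) : Measure ℂ :=
  m.withDensity fun z ↦ ENNReal.ofReal (1 + (c * z).re)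

lemma tilt_absolutelyContinuous (c : ℂ) : tilt c ≪ m := withDensity_absolutelyContinuous _ _

lemma tilt_zero : tilt 0 = m := by simp [tilt]

lemma ofReal_density (c z : ℂ) :
    ((1 + (c * z).re : ℝ) : ℂ) = 1 + c / 2 * z + conj c / 2 * conj z := by
  apply Complex.ext <;> simp <;> ring

lemma integral_tilt {c : ℂ} (hc : ‖c‖ ≤ 1) (g : ℂ → ℂ) :
    ∫ z, g z ∂tilt c = ∫ z, g z * ((1 + (c * z).re : ℝ) : ℂ) ∂m := by
  rw [tilt, integral_withDensity_eq_integral_toReal_smul (by fun_prop) (by simp)]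
  refine integral_congr_ae (ae_m_norm_eq_one.mono fun z hz ↦ ?_)
  have h : |(c * z).re| ≤ 1 := (abs_re_le_norm _).trans (by simpa [hz] using hc)
  simp only
  rw [ENNReal.toReal_ofReal (by linarith [neg_abs_le (c * z).re]), real_smul, mul_comm]

instance (c : ℂ) : IsFiniteMeasure (tilt c) := by
  refine isFiniteMeasure_withDensity_ofReal (Integrable.hasFiniteIntegral (μ := m) ?_)
  refine Integrable.of_bound (Measurable.aestronglyMeasurable (by fun_prop)) (1 + ‖c‖)
    (ae_m_norm_eq_one.mono fun z hz ↦ ?_)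
  refine (norm_add_le _ _).trans ?_
  simpa [hz] using abs_re_le_norm (c * z)

namespace IsInnerFixingZero

variable {f F : ℂ → ℂ}

lemma norm_le_one (hf : IsInnerFixingZero f F) {z : ℂ} (hz : z ∈ ball (0:ℂ) 1) : ‖f z‖ ≤ 1 := by
  simpa using (mem_ball_zero_iff.mp (hf.mapsTo hz)).le

lemma mapsTo_closedBall (hf : IsInnerFixingZero f F) :
    MapsTo f (ball 0 1) (closedBall (f 0) 1) := by
  rw [hf.map_zero]
  exact hf.mapsTo.mono_right ball_subset_closedBall

lemma norm_deriv_le_one (hf : IsInnerFixingZero f F) : ‖deriv f 0‖ ≤ 1 :=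
  norm_deriv_le_one_of_mapsTo_ball hf.differentiableOn hf.mapsTo_closedBall one_pos

lemma aestronglyMeasurable (hf : IsInnerFixingZero f F) : AEStronglyMeasurable F m :=
  aestronglyMeasurable_radialLimit hf.differentiableOn hf.tendsto

lemma integral_pow (hf : IsInnerFixingZero f F) (n : ℕ) : ∫ z, F z ^ n ∂m = 0 ^ n := by
  rw [integral_radialLimit (H := fun z ↦ f z ^ n) (hf.differentiableOn.pow n), hf.map_zero]
  · intro z hz
    rw [norm_pow]
    exact pow_le_one₀ (norm_nonneg _) (hf.norm_le_one hz)
  · exact hf.tendsto.mono fun z hz ↦ hz.pow n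

lemma integral_pow_mul_id (hf : IsInnerFixingZero f F) (n : ℕ) : ∫ z, F z ^ n * z ∂m = 0 := by
  rw [integral_radialLimit (H := fun z ↦ f z ^ n * z)
    ((hf.differentiableOn.pow n).mul differentiableOn_id), mul_zero]
  · intro z hz
    rw [norm_mul, norm_pow]
    exact mul_le_one₀ (pow_le_one₀ (norm_nonneg _) (hf.norm_le_one hz)) (norm_nonneg _)
      (mem_ball_zero_iff.mp hz).le
  · filter_upwards [hf.tendsto, isInnerFixingZero_id.tendsto] with z h1 h2
    exact (h1.pow n).mul h2

lemma integral_pow_mul_conj (hf : IsInnerFixingZero f F) (n : ℕ) :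
    ∫ z, F z ^ n * conj z ∂m = if n = 1 then deriv f 0 else 0 := by
  rcases n with _ | n
  · have := isInnerFixingZero_id.integral_pow_mul_id 0
    simp only [pow_zero, one_mul] at this ⊢
    rw [integral_conj, this]
    simp
  have hd : ∀ z ∈ ball (0:ℂ) 1, ‖dslope f 0 z‖ ≤ 1 := fun z hz ↦ by
    simpa using norm_dslope_le_div_of_mapsTo_ball hf.differentiableOn hf.mapsTo_closedBall hz
  rw [integral_radialLimit (H := fun z ↦ dslope f 0 z * f z ^ n)]
  · rcases n with _ | n <;> simp [hf.map_zero]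
  · exact ((differentiableOn_dslope (ball_mem_nhds _ one_pos)).mpr hf.differentiableOn).mul
      (hf.differentiableOn.pow n)
  · intro z hz
    rw [norm_mul, norm_pow]
    exact mul_le_one₀ (hd z hz) (by positivity)
      (pow_le_one₀ (norm_nonneg _) (hf.norm_le_one hz))
  · filter_upwards [hf.tendsto, isInnerFixingZero_id.tendsto, ae_m_norm_eq_one] with z h1 h2 hz
    have hz0 : z ≠ 0 := by rintro rfl; simp at hz
    have hzi : conj z = z⁻¹ := (inv_eq_of_mul_eq_one_right (mul_conj_of_norm_one hz)).symm
    have h3 := (h1.pow (n + 1)).div h2 hz0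
    rw [hzi]
    refine h3.congr' ?_
    filter_upwards [eventually_mem_Ioo] with r hr
    have hr0 : (r : ℂ) * z ≠ 0 := mul_ne_zero (by exact_mod_cast hr.1.ne') hz0
    rw [dslope_of_ne _ hr0, slope_def_field, hf.map_zero]
    simp only [id, Pi.div_apply]
    ring

lemma integrable_pow_mul (hf : IsInnerFixingZero f F) (n : ℕ) {g : ℂ → ℂ}
    (hg : AEStronglyMeasurable g m) (hg1 : ∀ᵐ z ∂m, ‖g z‖ ≤ 1) :
    Integrable (fun z ↦ F z ^ n * g z) m := by
  refine integrable_of_norm_le_one ((hf.aestronglyMeasurable.pow n).mul hg) ?_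
  filter_upwards [hf.norm_eq_one, hg1] with z h1 h2
  simpa [h1] using h2

lemma integral_pow_tilt (hf : IsInnerFixingZero f F) {c : ℂ} (hc : ‖c‖ ≤ 1) (n : ℕ) :
    ∫ z, F z ^ n ∂tilt c = 0 ^ n + conj c / 2 * if n = 1 then deriv f 0 else 0 := by
  have i0 := hf.integrable_pow_mul n (g := fun _ ↦ 1) (by fun_prop) (by simp)
  have i1 := hf.integrable_pow_mul n (g := fun z ↦ z) (by fun_prop)
    (ae_m_norm_eq_one.mono fun z hz ↦ hz.le)
  have i2 := hf.integrable_pow_mul n (g := fun z ↦ conj z) (by fun_prop)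
    (ae_m_norm_eq_one.mono fun z hz ↦ by simp [hz])
  have h : ∀ z, F z ^ n * ((1 + (c * z).re : ℝ) : ℂ) =
      F z ^ n * 1 + c / 2 * (F z ^ n * z) + conj c / 2 * (F z ^ n * conj z) := fun z ↦ by
    rw [ofReal_density]; ring
  simp_rw [integral_tilt hc, h]
  rw [integral_add (by exact i0.add (i1.const_mul _)) (i2.const_mul _), integral_add i0 (i1.const_mul _),
    integral_const_mul, integral_const_mul, hf.integral_pow_mul_id, hf.integral_pow_mul_conj]
  simp [hf.integral_pow]

/-- Boundary values of an inner function push `1 + Re (c z)` to `1 + Re (c (conj f'(0)) z)`. -/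
lemma map_tilt (hf : IsInnerFixingZero f F) {c : ℂ} (hc : ‖c‖ ≤ 1) :
    (tilt c).map F = tilt (c * conj (deriv f 0)) := by
  have hF : AEMeasurable F (tilt c) :=
    (hf.aestronglyMeasurable.mono_ac (tilt_absolutelyContinuous c)).aemeasurable
  have hc' : ‖c * conj (deriv f 0)‖ ≤ 1 := by
    rw [norm_mul, RCLike.norm_conj]
    exact mul_le_one₀ hc (norm_nonneg _) hf.norm_deriv_le_one
  refine measure_ext_of_moments ?_ ((tilt_absolutelyContinuous _).ae_le ae_m_norm_eq_one) ?_
  · rw [ae_map_iff hF (measurableSet_eq_fun (by fun_prop) (by fun_prop))]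
    exact (tilt_absolutelyContinuous _).ae_le hf.norm_eq_one
  · intro n
    rw [integral_map hF (by fun_prop), hf.integral_pow_tilt hc]
    have := isInnerFixingZero_id.integral_pow_tilt hc' n
    simp only [id] at this
    rw [this]
    split_ifs <;> simp
    ring

lemma map_m (hf : IsInnerFixingZero f F) : m.map F = m := by
  simpa [tilt_zero] using hf.map_tilt (c := 0) (by simp)

lemma integral_comp_mul_density (hf : IsInnerFixingZero f F) {c : ℂ} (hc : ‖c‖ ≤ 1) {g : ℂ → ℂ}
    (hg : AEStronglyMeasurable g m) :
    ∫ z, g (F z) * ((1 + (c * z).re : ℝ) : ℂ) ∂m =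
      ∫ z, g z * ((1 + (c * conj (deriv f 0) * z).re : ℝ) : ℂ) ∂m := by
  have hc' : ‖c * conj (deriv f 0)‖ ≤ 1 := by
    rw [norm_mul, RCLike.norm_conj]
    exact mul_le_one₀ hc (norm_nonneg _) hf.norm_deriv_le_one
  rw [← integral_tilt hc (fun z ↦ g (F z)), ← integral_tilt hc' g, ← hf.map_tilt hc,
    integral_map (hf.aestronglyMeasurable.mono_ac (tilt_absolutelyContinuous c)).aemeasurable]
  rw [hf.map_tilt hc]
  exact hg.mono_ac (tilt_absolutelyContinuous _)

lemma comp_aestronglyMeasurable (hf : IsInnerFixingZero f F) {g : ℂ → ℂ}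
    (hg : AEStronglyMeasurable g m) : AEStronglyMeasurable (fun z ↦ g (F z)) m :=
  (hf.map_m.symm ▸ hg).comp_aemeasurable hf.aestronglyMeasurable.aemeasurable

lemma ae_comp (hf : IsInnerFixingZero f F) {p : ℂ → Prop} (hp : ∀ᵐ z ∂m, p z) :
    ∀ᵐ z ∂m, p (F z) :=
  ae_of_ae_map hf.aestronglyMeasurable.aemeasurable (hf.map_m.symm ▸ hp)

/-- The transfer operator of `F` maps `z` to `conj f'(0) * z`. -/
lemma integral_mul_comp (hf : IsInnerFixingZero f F) {g : ℂ → ℂ}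
    (hg : AEStronglyMeasurable g m) (hg1 : ∀ᵐ z ∂m, ‖g z‖ ≤ 1) :
    ∫ z, z * g (F z) ∂m = conj (deriv f 0) * ∫ z, z * g z ∂m := by
  have hre {h : ℂ → ℂ} (hh : AEStronglyMeasurable h m) (hh1 : ∀ᵐ z ∂m, ‖h z‖ ≤ 1) (a : ℂ) :
      ∫ z, h z * ((1 + (1 * a * z).re : ℝ) : ℂ) ∂m +
        I * ∫ z, h z * ((1 + (-I * a * z).re : ℝ) : ℂ) ∂m =
      (1 + I) * ∫ z, h z ∂m + a * ∫ z, z * h z ∂m := by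
    have i0 : Integrable h m := integrable_of_norm_le_one hh hh1
    have i1 : Integrable (fun z ↦ z * h z) m := by
      refine integrable_of_norm_le_one (by fun_prop) ?_
      filter_upwards [ae_m_norm_eq_one, hh1] with z h1 h2
      simpa [h1] using h2
    have i2 (b : ℂ) : Integrable (fun z ↦ h z * ((1 + (b * z).re : ℝ) : ℂ)) m := by
      refine i0.mul_bdd (c := 1 + ‖b‖) (Continuous.aestronglyMeasurable (by fun_prop))
        (ae_m_norm_eq_one.mono fun z hz ↦ ?_)
      rw [norm_real]
      refine (norm_add_le _ _).trans ?_
      simpa [hz] using abs_re_le_norm (b * z)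
    rw [← integral_const_mul, ← integral_const_mul, ← integral_const_mul,
      ← integral_add (i2 _) ((i2 _).const_mul _), ← integral_add (i0.const_mul _) (i1.const_mul _)]
    refine integral_congr_ae (Eventually.of_forall fun z ↦ ?_)
    have h3 : (((a * z).re : ℝ) : ℂ) + I * ((-I * (a * z)).re : ℝ) = a * z := by
      apply Complex.ext <;> simp
    simp only [one_mul, mul_assoc, ofReal_add, ofReal_one] at h3 ⊢
    linear_combination h z * h3
  have e0 : ∫ z, g (F z) ∂m = ∫ z, g z ∂m := by
    rw [← integral_map (f := g) hf.aestronglyMeasurable.aemeasurable (hf.map_m.symm ▸ hg), hf.map_m]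
  have e1 := hf.integral_comp_mul_density (c := 1) (by simp) hg
  have e2 := hf.integral_comp_mul_density (c := -I) (by simp) hg
  have h1 := hre (hf.comp_aestronglyMeasurable hg) (hf.ae_comp hg1) 1
  have h2 := hre hg hg1 (conj (deriv f 0))
  simp only [mul_one] at h1
  rw [e1, e2, h2, e0] at h1
  linear_combination -h1

lemma comp_iterate_aestronglyMeasurable (hf : IsInnerFixingZero f F) (n : ℕ) {g : ℂ → ℂ}
    (hg : AEStronglyMeasurable g m) : AEStronglyMeasurable (fun z ↦ g (F^[n] z)) m := by
  induction n with
  | zero => exact hg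
  | succ n ih => exact hf.comp_aestronglyMeasurable ih

lemma ae_comp_iterate (hf : IsInnerFixingZero f F) (n : ℕ) {p : ℂ → Prop}
    (hp : ∀ᵐ z ∂m, p z) : ∀ᵐ z ∂m, p (F^[n] z) := by
  induction n with
  | zero => exact hp
  | succ n ih => exact hf.ae_comp ih

lemma integral_comp_iterate (hf : IsInnerFixingZero f F) (n : ℕ) {g : ℂ → ℂ}
    (hg : AEStronglyMeasurable g m) : ∫ z, g (F^[n] z) ∂m = ∫ z, g z ∂m := by
  induction n with
  | zero => rfl
  | succ n ih =>
    have h := hf.map_m.symm ▸ hf.comp_iterate_aestronglyMeasurable n hg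
    have := integral_map hf.aestronglyMeasurable.aemeasurable h
    rw [hf.map_m] at this
    exact this.symm.trans ih

lemma integral_mul_comp_iterate (hf : IsInnerFixingZero f F) (n : ℕ) {g : ℂ → ℂ}
    (hg : AEStronglyMeasurable g m) (hg1 : ∀ᵐ z ∂m, ‖g z‖ ≤ 1) :
    ∫ z, z * g (F^[n] z) ∂m = conj (deriv f 0) ^ n * ∫ z, z * g z ∂m := by
  induction n with
  | zero => simp
  | succ n ih =>
    have := hf.integral_mul_comp (hf.comp_iterate_aestronglyMeasurable n hg)
      (hf.ae_comp_iterate n hg1)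
    rw [ih] at this
    rw [pow_succ', mul_assoc, ← this]
    rfl

lemma norm_integral_mul_conj_mul (hf : IsInnerFixingZero f F) {i j : ℕ} (hij : i ≤ j)
    {g : ℂ → ℂ} (hg : AEStronglyMeasurable g m) (hg1 : ∀ᵐ z ∂m, ‖g z‖ ≤ 1) :
    ‖∫ z, F^[i] z * conj (F^[j] z) * g (F^[j] z) ∂m‖ = ‖deriv f 0‖ ^ (j - i) * ‖∫ z, g z ∂m‖ := by
  obtain ⟨k, rfl⟩ := Nat.exists_eq_add_of_le' hij
  have hm : AEStronglyMeasurable (fun z ↦ conj z * g z) m :=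
    (continuous_conj.aestronglyMeasurable).mul hg
  have h1 : ∫ z, F^[i] z * conj (F^[k + i] z) * g (F^[k + i] z) ∂m =
      ∫ z, z * (conj (F^[k] z) * g (F^[k] z)) ∂m := by
    rw [← hf.integral_comp_iterate i (g := fun z ↦ z * (conj (F^[k] z) * g (F^[k] z)))
      (aestronglyMeasurable_id.mul (hf.comp_iterate_aestronglyMeasurable k hm))]
    simp only [Function.iterate_add_apply, mul_assoc]
  have h2 : ∫ z, z * (conj z * g z) ∂m = ∫ z, g z ∂m := by
    refine integral_congr_ae (ae_m_norm_eq_one.mono fun z hz ↦ ?_)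
    simp only
    rw [← mul_assoc, mul_conj_of_norm_one hz, one_mul]
  rw [h1, hf.integral_mul_comp_iterate k hm, h2]
  · simp
  · filter_upwards [ae_m_norm_eq_one, hg1] with z hz h
    simpa [hz] using h

lemma norm_integral_spow_mul (hf : IsInnerFixingZero f F) {ε δ : ℤ} (hε : ε = 1 ∨ ε = -1)
    (hεδ : ε * δ = -1) {i j : ℕ} (hij : i ≤ j) {g : ℂ → ℂ}
    (hg : AEStronglyMeasurable g m) (hg1 : ∀ᵐ z ∂m, ‖g z‖ ≤ 1) :
    ‖∫ z, spow F ε i z * spow F δ j z * g (F^[j] z) ∂m‖ =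
      ‖deriv f 0‖ ^ (j - i) * ‖∫ z, g z ∂m‖ := by
  rcases hε with rfl | rfl
  · obtain rfl : δ = -1 := by lia
    simpa [spow] using hf.norm_integral_mul_conj_mul hij hg hg1
  · obtain rfl : δ = 1 := by lia
    have h := hf.norm_integral_mul_conj_mul hij (g := fun z ↦ conj (g z))
      (continuous_conj.comp_aestronglyMeasurable hg) (by simpa using hg1)
    rw [integral_conj, RCLike.norm_conj] at h
    rw [← h, ← RCLike.norm_conj, ← integral_conj]
    simp [spow]

lemma spow_aestronglyMeasurable (hf : IsInnerFixingZero f F) (ε : ℤ) (n : ℕ) :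
    AEStronglyMeasurable (spow F ε n) m := by
  have h := hf.comp_iterate_aestronglyMeasurable n aestronglyMeasurable_id
  unfold spow
  split_ifs
  · exact h
  · exact continuous_conj.comp_aestronglyMeasurable h

lemma norm_spow (hf : IsInnerFixingZero f F) (ε : ℤ) (n : ℕ) :
    ∀ᵐ z ∂m, ‖spow F ε n z‖ = 1 := by
  filter_upwards [hf.ae_comp_iterate n ae_m_norm_eq_one] with z hz
  unfold spow
  split_ifs <;> simp [hz]

end IsInnerFixingZero

theorem stmt8 (f F : ℂ → ℂ)
    (hf : DifferentiableOn ℂ f (Metric.ball 0 1))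
    (hmap : Set.MapsTo f (Metric.ball 0 1) (Metric.ball 0 1))
    (h0 : f 0 = 0)
    (hbd : ∀ᵐ z ∂m, Filter.Tendsto (fun r : ℝ => f ((r : ℂ) * z))
      (nhdsWithin 1 (Set.Iio 1)) (nhds (F z)))
    (hinner : ∀ᵐ z ∂m, ‖F z‖ = 1)
    (hrot : ¬ ∃ c : ℂ, Set.EqOn f (fun w => c * w) (Metric.ball 0 1))
    (ε₁ ε₂ ε₃ ε₄ : ℤ)
    (hε1 : ε₁ = 1 ∨ ε₁ = -1) (hε2 : ε₂ = 1 ∨ ε₂ = -1)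
    (hε3 : ε₃ = 1 ∨ ε₃ = -1) (hε4 : ε₄ = 1 ∨ ε₄ = -1)
    (h12 : ε₁ * ε₂ = -1) (h34 : ε₃ * ε₄ = -1)
    (n₁ n₂ n₃ n₄ : ℕ) (h1 : 0 < n₁) (hlt12 : n₁ < n₂) (hlt23 : n₂ < n₃) (hlt34 : n₃ < n₄) :
    ‖∫ z, spow F ε₁ n₁ z * spow F ε₂ n₂ z * spow F ε₃ n₃ z * spow F ε₄ n₄ z ∂m‖
      = ‖deriv f 0‖ ^ ((n₂ - n₁) + (n₄ - n₃)) := by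
  have hF : IsInnerFixingZero f F := ⟨hf, hmap, h0, hbd, hinner⟩
  have hshift (ε : ℤ) {n : ℕ} (hn : n₂ ≤ n) (z : ℂ) :
      spow F ε (n - n₂) (F^[n₂] z) = spow F ε n z := by
    simp only [spow, ← Function.iterate_add_apply, Nat.sub_add_cancel hn]
  have e1 := hF.norm_integral_spow_mul hε1 h12 hlt12.le
    (g := fun z ↦ spow F ε₃ (n₃ - n₂) z * spow F ε₄ (n₄ - n₂) z)
    ((hF.spow_aestronglyMeasurable _ _).mul (hF.spow_aestronglyMeasurable _ _)) (by
      filter_upwards [hF.norm_spow ε₃ (n₃ - n₂), hF.norm_spow ε₄ (n₄ - n₂)] with z h3 h4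
      simp [h3, h4])
  have e2 := hF.norm_integral_spow_mul hε3 h34 (Nat.sub_le_sub_right hlt34.le n₂)
    (g := fun _ ↦ 1) (by fun_prop) (by simp)
  simp only [hshift _ hlt23.le, hshift _ (hlt23.trans hlt34).le, ← mul_assoc] at e1
  simp only [mul_one, integral_const, probReal_univ, one_smul, norm_one] at e2
  rw [e1, e2, ← pow_add, Nat.sub_sub_sub_cancel_right hlt23.le]
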